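/- arXiv:2508.17145 — 4 statements merged into one kernel-verified Lean document; each statement's English description precedes it below -/
import Mathlib

section
/- Let X be a positive real-valued random variable with finite mean μ = E[X] > 0 and finite second moment. Fix q > 0, set p = P(X ≤ q), m = E[X·1{X ≤ q}]/μ, Y = X·1{X ≤ q} − m·X, and Z = 1{X ≤ q} − p. Then E[Y²] − E[(Y − qZ)²] = 2q·m(1 − m)·μ − q²·p(1 − p). Equivalently, the difference between the asymptotic variances of the fixed-threshold and estimated-threshold estimators satisfies V_a{m̂(q)} − V_a{m̂(q̂)} = q·[2m(1−m)μ − q·p(1−p)]/(n·μ²). -/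
/-!
With `A = X·1{X ≤ q}` and `I = 1{X ≤ q}`, the relations `X·I = A·I = A` and `I² = I` give the pointwise identity
`Y² - (Y - qZ)² = 2q·YZ - q²·Z² = 2q((1 - p - m)A + mpX) - q²((1 - 2p)I + p²)`.
The right side is linear in `A`, `X`, `I`, whose means are `mμ`, `μ`, `p`, so integrating it gives
`2q·m(1 - m)μ - q²·p(1 - p)`. The second moment is used only to make `Y²` integrable, which allows
the integral of the difference to be split.
-/

open MeasureTheory ProbabilityTheory Filter Real
open scoped ENNReal NNReal Topology

theorem stmt_4
    {Ω : Type*} [MeasureSpace Ω] [IsProbabilityMeasure (ℙ : Measure Ω)]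
    (X : Ω → ℝ) (hmeas : Measurable X)
    (hpos : ∀ᵐ ω ∂ℙ, 0 < X ω)
    (hint : Integrable X ℙ)
    (hint2 : Integrable (fun ω => (X ω) ^ 2) ℙ)
    (μ : ℝ) (hμ : μ = ∫ ω, X ω ∂ℙ) (hμpos : 0 < μ)
    (q : ℝ) (hq : 0 < q)
    (p : ℝ) (hp : p = (ℙ {ω | X ω ≤ q}).toReal)
    (m : ℝ) (hm : m = (∫ ω, (if X ω ≤ q then X ω else 0) ∂ℙ) / μ)
    (Y Z : Ω → ℝ)
    (hY : ∀ ω, Y ω = (if X ω ≤ q then X ω else 0) - m * X ω)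
    (hZ : ∀ ω, Z ω = (if X ω ≤ q then (1 : ℝ) else 0) - p) :
    (∫ ω, (Y ω) ^ 2 ∂ℙ) - (∫ ω, (Y ω - q * Z ω) ^ 2 ∂ℙ)
        = 2 * q * (m * (1 - m)) * μ - q ^ 2 * (p * (1 - p)) ∧
      ∀ n : ℕ, 0 < n →
        (∫ ω, (Y ω) ^ 2 ∂ℙ) / (n * μ ^ 2) - (∫ ω, (Y ω - q * Z ω) ^ 2 ∂ℙ) / (n * μ ^ 2)
          = q * (2 * (m * (1 - m)) * μ - q * (p * (1 - p))) / (n * μ ^ 2) := by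
  have hS : MeasurableSet {ω | X ω ≤ q} := measurableSet_le hmeas measurable_const
  have hA : Integrable (fun ω => if X ω ≤ q then X ω else 0) ℙ :=
    (hint.indicator hS).congr (Eventually.of_forall fun ω => by simp [Set.indicator])
  have hB : Integrable (fun ω => if X ω ≤ q then X ω ^ 2 else 0) ℙ :=
    (hint2.indicator hS).congr (Eventually.of_forall fun ω => by simp [Set.indicator])
  have hI : Integrable (fun ω => if X ω ≤ q then (1 : ℝ) else 0) ℙ :=
    ((integrable_const (1 : ℝ)).indicator hS).congr
      (Eventually.of_forall fun ω => by simp [Set.indicator])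
  have eI : ∫ ω, (if X ω ≤ q then (1 : ℝ) else 0) ∂ℙ = p := by
    have h := integral_indicator_one (μ := (ℙ : Measure Ω)) hS
    rw [hp, ← measureReal_def, ← h]
    simp only [Set.indicator, Set.mem_ofPred_eq, Pi.one_apply]
  have eA : ∫ ω, (if X ω ≤ q then X ω else 0) ∂ℙ = m * μ := by
    rw [hm, div_mul_cancel₀ _ hμpos.ne']
  have hY2 : Integrable (fun ω => Y ω ^ 2) ℙ := by
    refine ((hB.const_mul (1 - 2 * m)).add (hint2.const_mul (m ^ 2))).congr
      (Eventually.of_forall fun ω => ?_)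
    simp only [Pi.add_apply, hY]
    split_ifs <;> ring
  have hlin : Integrable (fun ω => 2 * q * (1 - p - m) * (if X ω ≤ q then X ω else 0)
      + 2 * q * (m * p) * X ω) ℙ :=
    (hA.const_mul _).add (hint.const_mul _)
  have hcst : Integrable (fun ω => q ^ 2 * (1 - 2 * p) * (if X ω ≤ q then (1 : ℝ) else 0)
      + q ^ 2 * p ^ 2) ℙ :=
    (hI.const_mul _).add (integrable_const _)
  have hpt : ∀ ω, (Y ω - q * Z ω) ^ 2 = Y ω ^ 2 -
      ((2 * q * (1 - p - m) * (if X ω ≤ q then X ω else 0) + 2 * q * (m * p) * X ω)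
        - (q ^ 2 * (1 - 2 * p) * (if X ω ≤ q then (1 : ℝ) else 0) + q ^ 2 * p ^ 2)) := by
    intro ω
    rw [hY, hZ]
    split_ifs <;> ring
  have key : (∫ ω, (Y ω) ^ 2 ∂ℙ) - (∫ ω, (Y ω - q * Z ω) ^ 2 ∂ℙ)
      = 2 * q * (m * (1 - m)) * μ - q ^ 2 * (p * (1 - p)) := by
    simp_rw [hpt]
    rw [integral_sub hY2 (by exact hlin.sub hcst), integral_sub hlin hcst,
      integral_add (hA.const_mul _) (hint.const_mul _),
      integral_add (hI.const_mul _) (integrable_const _)]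
    simp only [integral_const_mul, eA, eI, ← hμ, integral_const, probReal_univ, one_smul]
    ring
  refine ⟨key, fun n _ => ?_⟩
  rw [← sub_div, key]
  ring
end

section
/- Let X be a positive real-valued random variable with finite mean μ = E[X] > 0, finite variance σ², and finite second moment. Fix q > 0, set p = P(X ≤ q) with 0 < p < 1, m = E[X·1{X ≤ q}]/μ, Y = X·1{X ≤ q} − m·X, Z = 1{X ≤ q} − p, γ = m·μ/p, and ε² = E[X²·1{X ≤ q}]/p − γ². Then E[(Y − qZ)²]/μ² = [σ²·m² + (1 − 2m)·p·ε² + p(1 − p)·(q − γ)² − 2p·m·(q − γ)·(μ − γ)]/μ². That is, the proposed asymptotic variance of m̂(q̂) coincides with the Beach–Davidson asymptotic variance formula. -/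
open MeasureTheory ProbabilityTheory Filter Real
open scoped ENNReal NNReal Topology

/-!
With `I` the indicator of `{X ≤ q}`, the square `(Y - q Z)²` expands, using `I² = I`, into a linear
combination of `X² I`, `X²`, `X I`, `X`, `I` and `1`. Each of these is integrable, so its expectation
is a polynomial in `m`, `q`, `p`, `μ`, `E[X²]`, `E[X I]` and `E[X² I]`. Substituting
`E[X I] = m μ = p γ` and `E[X² I] = p (ε² + γ²)` turns it into the Beach–Davidson expression.
-/

theorem stmt_7
    {Ω : Type*} [MeasureSpace Ω] [IsProbabilityMeasure (ℙ : Measure Ω)]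
    (X : Ω → ℝ) (hmeas : Measurable X)
    (hpos : ∀ᵐ ω ∂ℙ, 0 < X ω)
    (hint : Integrable X ℙ)
    (hint2 : Integrable (fun ω => (X ω) ^ 2) ℙ)
    (μ : ℝ) (hμ : μ = ∫ ω, X ω ∂ℙ) (hμpos : 0 < μ)
    (σ2 : ℝ) (hσ2 : σ2 = (∫ ω, (X ω) ^ 2 ∂ℙ) - μ ^ 2)
    (q : ℝ) (hq : 0 < q)
    (p : ℝ) (hp : p = (ℙ {ω | X ω ≤ q}).toReal) (hp01 : p ∈ Set.Ioo (0 : ℝ) 1)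
    (m : ℝ) (hm : m = (∫ ω, (if X ω ≤ q then X ω else 0) ∂ℙ) / μ)
    (Y Z : Ω → ℝ)
    (hY : ∀ ω, Y ω = (if X ω ≤ q then X ω else 0) - m * X ω)
    (hZ : ∀ ω, Z ω = (if X ω ≤ q then (1 : ℝ) else 0) - p)
    (γ : ℝ) (hγ : γ = m * μ / p)
    (ε2 : ℝ) (hε2 : ε2 = (∫ ω, (if X ω ≤ q then (X ω) ^ 2 else 0) ∂ℙ) / p - γ ^ 2) :
    (∫ ω, (Y ω - q * Z ω) ^ 2 ∂ℙ) / μ ^ 2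
      = (σ2 * m ^ 2 + (1 - 2 * m) * p * ε2 + p * (1 - p) * (q - γ) ^ 2
          - 2 * p * m * (q - γ) * (μ - γ)) / μ ^ 2 := by
  have hs : MeasurableSet {ω | X ω ≤ q} := measurableSet_le hmeas measurable_const
  have hp0 : p ≠ 0 := hp01.1.ne'
  have i1 : Integrable (fun ω => if X ω ≤ q then X ω else 0) ℙ := hint.indicator hs
  have i2 : Integrable (fun ω => if X ω ≤ q then (X ω) ^ 2 else 0) ℙ := hint2.indicator hs
  have i0 : Integrable (fun ω => if X ω ≤ q then (1 : ℝ) else 0) ℙ :=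
    (integrable_const (1 : ℝ)).indicator hs
  have e0 : ∫ ω, (if X ω ≤ q then (1 : ℝ) else 0) ∂ℙ = p := by
    rw [hp]
    exact integral_indicator_one hs
  have e1 : ∫ ω, (if X ω ≤ q then X ω else 0) ∂ℙ = m * μ := by
    rw [hm]; field_simp
  have e2 : ∫ ω, (if X ω ≤ q then (X ω) ^ 2 else 0) ∂ℙ = p * (ε2 + γ ^ 2) := by
    rw [hε2]; field_simp; ring
  have eX2 : ∫ ω, (X ω) ^ 2 ∂ℙ = σ2 + μ ^ 2 := by rw [hσ2]; ring
  have hG : m * μ = p * γ := by rw [hγ]; field_simp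
  have hexp : ∀ ω, (Y ω - q * Z ω) ^ 2
      = (1 - 2 * m) * (if X ω ≤ q then (X ω) ^ 2 else 0) + m ^ 2 * (X ω) ^ 2
        + (2 * q * (p + m - 1)) * (if X ω ≤ q then X ω else 0) + (-2 * m * q * p) * X ω
        + (q ^ 2 * (1 - 2 * p)) * (if X ω ≤ q then (1 : ℝ) else 0) + q ^ 2 * p ^ 2 := by
    intro ω
    rw [hY, hZ]
    split_ifs <;> ring
  have hE : ∫ ω, (Y ω - q * Z ω) ^ 2 ∂ℙ
      = (1 - 2 * m) * (p * (ε2 + γ ^ 2)) + m ^ 2 * (σ2 + μ ^ 2)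
        + (2 * q * (p + m - 1)) * (m * μ) + (-2 * m * q * p) * μ
        + (q ^ 2 * (1 - 2 * p)) * p + q ^ 2 * p ^ 2 := by
    have j1 := i2.const_mul (1 - 2 * m)
    have j2 := j1.fun_add (hint2.const_mul (m ^ 2))
    have j3 := j2.fun_add (i1.const_mul (2 * q * (p + m - 1)))
    have j4 := j3.fun_add (hint.const_mul (-2 * m * q * p))
    have j5 := j4.fun_add (i0.const_mul (q ^ 2 * (1 - 2 * p)))
    simp_rw [hexp]
    rw [integral_add j5 (integrable_const _), integral_add j4 (i0.const_mul _),
      integral_add j3 (hint.const_mul _), integral_add j2 (i1.const_mul _),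
      integral_add j1 (hint2.const_mul _)]
    simp only [integral_const_mul, e0, e1, e2, eX2, ← hμ]
    simp
  rw [hE]
  congr 1
  -- The two sides differ by a multiple of `m μ - p γ`.
  linear_combination (m * μ - p * γ + 2 * q * (p + m - 1)) * hG
end

section
/- Define h(t) = 2(e^t − 1 − t)(1 + t) − t(e^t − 1) for t ∈ ℝ. Then h(t) ≥ 0 for all t ≥ 0. -/
theorem stmt_12 (h : ℝ → ℝ)
    (hh : ∀ t, h t = 2 * (Real.exp t - 1 - t) * (1 + t) - t * (Real.exp t - 1)) :
    ∀ t : ℝ, 0 ≤ t → 0 ≤ h t := by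
  intro t ht
  have hexp := Real.quadratic_le_exp_of_nonneg ht
  -- `h t = (2 + t) e^t - (2 + 3t + 2t²)`, and `(2 + t)(1 + t + t²/2) = 2 + 3t + 2t² + t³/2`.
  have key : h t = (2 + t) * (Real.exp t - (1 + t + t ^ 2 / 2)) + t ^ 3 / 2 := by
    rw [hh]; ring
  rw [key]
  have := sub_nonneg.mpr hexp
  positivity
end

section
/- Let X be exponentially distributed with rate λ > 0, fix p ∈ (0,1), and let q = −ln(1 − p)/λ, μ = λ^{-1}, and m = 1 − e^{−λq}(1 + λq). Then 2m(1 − m)·μ ≥ q·p(1 − p); hence the difference of asymptotic variances V_a{m̂(q)} − V_a{m̂(q̂)} = q·[2m(1−m)μ − q·p(1−p)]/(n·μ²) is nonnegative, i.e., for the exponential distribution treating the quantile as fixed inflates the asymptotic variance. -/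
/-!
With `t = l * q > 0` one has `1 - p = exp (-t)`, and after dividing by `exp (-t) / l` the inequality
becomes `2 (1 + t) (1 - exp (-t) (1 + t)) ≥ t (1 - exp (-t))`. Multiplying by `exp t` turns this into
`(2 + t) exp t ≥ 2 + 3 t + 2 t ^ 2`, which follows from `exp t ≥ 1 + t + t ^ 2 / 2`.
-/

theorem exp_neg_ineq {t : ℝ} (ht : 0 ≤ t) :
    t * (1 - Real.exp (-t)) ≤ 2 * (1 + t) * (1 - Real.exp (-t) * (1 + t)) := by
  have hE := Real.quadratic_le_exp_of_nonneg ht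
  have hu : Real.exp (-t) * Real.exp t = 1 := by rw [← Real.exp_add]; simp
  have hpoly : 0 ≤ (2 + t) * Real.exp t - (2 + 3 * t + 2 * t ^ 2) := by
    have h1 := mul_le_mul_of_nonneg_left hE (by linarith : 0 ≤ 2 + t)
    have h2 : 0 ≤ t ^ 3 := by positivity
    nlinarith
  have h := mul_nonneg (Real.exp_pos (-t)).le hpoly
  linear_combination h + (2 + t) * hu

theorem stmt_14 (l : ℝ) (hl : 0 < l) (p : ℝ) (hp : p ∈ Set.Ioo (0 : ℝ) 1)
    (q μ m : ℝ) (hq : q = -Real.log (1 - p) / l) (hμ : μ = l⁻¹)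
    (hm : m = 1 - Real.exp (-l * q) * (1 + l * q)) :
    2 * (m * (1 - m)) * μ ≥ q * (p * (1 - p)) ∧
      ∀ n : ℕ, 0 < n →
        0 ≤ q * (2 * (m * (1 - m)) * μ - q * (p * (1 - p))) / (n * μ ^ 2) := by
  obtain ⟨hp0, hp1⟩ := hp
  have hq0 : 0 ≤ q := by
    rw [hq]
    exact div_nonneg (neg_nonneg.2 (Real.log_nonpos (by linarith) (by linarith))) hl.le
  have hlq : l * q = -Real.log (1 - p) := by rw [hq]; field_simp
  have hexp : Real.exp (-(l * q)) = 1 - p := by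
    rw [hlq, neg_neg, Real.exp_log (by linarith)]
  have hkey := exp_neg_ineq (mul_nonneg hl.le hq0)
  rw [neg_mul, hexp] at hm
  rw [hexp] at hkey
  have hmain : q * (p * (1 - p)) ≤ 2 * (m * (1 - m)) * μ := by
    have h := mul_le_mul_of_nonneg_left hkey
      (mul_nonneg (by linarith : 0 ≤ 1 - p) (inv_pos.2 hl).le)
    have hinv : l⁻¹ * l = 1 := inv_mul_cancel₀ hl.ne'
    rw [hm, hμ]
    linear_combination h - q * p * (1 - p) * hinv
  exact ⟨hmain, fun n _ => div_nonneg (mul_nonneg hq0 (sub_nonneg.2 hmain)) (by positivity)⟩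
end
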